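/- Let Γ and Δ be finite graphs that are homeomorphic as topological spaces (i.e., as 1-complexes), and let X be a length space. Then X has Γ as an asymptotic minor if and only if X has Δ as an asymptotic minor. -/

import Mathlib

/-!
Both graphs subdivide a common graph `Λ`, so it suffices that `Λ` and a finite subdivision `Λ'`
of it are asymptotic minors of the same length spaces
(`hasAsymptoticMinor_iff_of_isSubdivisionOf`).

It is convenient to relax fat minors (`HasWeakFatMinor`): branch sets are path-connected, and an
edge is represented by any set containing a path between its two branch sets. A fat minor yields a
relaxed one by thickening branch sets, since in a length space a thickening of a connected set is
path-connected. Conversely, one closes the branch sets, cuts each path at its last exit from one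
branch set before its first entry into the other, and extracts an arc. That a path contains an arc
between its endpoints (`exists_arc`) is proved by Zorn's lemma: among the closed sets
`C ⊆ [0, 1]` containing `0` and `1` such that the path takes equal values at the two ends of each
gap of `C`, a minimal one is chosen. Making the path constant on the gaps of `C` gives a path whose
fibres are intervals, and a continuous monotone function collapsing exactly these fibres
reparametrises it injectively (`arc_of_monotone_fibres`).

From `Λ'` to `Λ` (`HasWeakFatMinor.of_subdivision`) one takes the union of the edge sets and the
inner branch sets along each subdivided edge. From `Λ` to `Λ'` (`HasWeakFatMinor.subdivision`) the
path of an edge `uw` has to be cut into many pieces, the non-consecutive ones being far apart, and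
the difficulty is that the path may return close to itself. Let `R` be large and `p` the last point
of the path at distance `R` from the branch set `B` of `u`. The part before `p` is replaced by an
almost-geodesic from `B` to `p`, along which the distance to `B` increases up to a bounded error
(`IsLengthSpace.exists_escaping_path`). Cutting the almost-geodesic at equally spaced distances
from `B`, and keeping the rest of the path as one last piece, gives the required chain
(`IsLengthSpace.exists_chain`). All of it stays at bounded distance from the original path, hence
far from the chains of the other edges and from the other branch sets.
-/


/-- A metric space is a length space if any two points are joined by paths of length
arbitrarily close to their distance. -/
def IsLengthSpace (X : Type*) [MetricSpace X] : Prop :=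
  ∀ x y : X, ∀ ε : ℝ, 0 < ε → ∃ p : Path x y,
    eVariationOn (fun t => p t) Set.univ ≤ ENNReal.ofReal (dist x y + ε)
/-- `S` is an arc from `a` to `b`: the image of an injective path. -/
def IsArcIn {X : Type*} [TopologicalSpace X] (S : Set X) (a b : X) : Prop :=
  ∃ p : Path a b, Function.Injective (fun t => p t) ∧ Set.range (fun t => p t) = S

/-- A metric space `X` has the graph `H` as a `K`-fat minor: there are pairwise disjoint
connected branch sets `B v` and pairwise disjoint branch arcs `P e`, each branch arc meeting
the union of the branch sets exactly at its two endpoints (lying in the branch sets of the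
endvertices of the corresponding edge), such that any two of these sets are at distance
at least `K` unless they are equal or an incident branch set/branch arc pair. -/
def HasMetricFatMinor {W : Type*} (H : SimpleGraph W) (X : Type*) [MetricSpace X]
    (K : ℝ) : Prop :=
  ∃ (B : W → Set X) (P : Sym2 W → Set X),
    (∀ v, IsConnected (B v)) ∧
    (∀ v v', v ≠ v' → Disjoint (B v) (B v')) ∧
    (∀ u w, H.Adj u w → ∃ a ∈ B u, ∃ b ∈ B w,
        IsArcIn (P s(u, w)) a b ∧ P s(u, w) ∩ (⋃ v, B v) = {a, b}) ∧
    (∀ e ∈ H.edgeSet, ∀ e' ∈ H.edgeSet, e ≠ e' → Disjoint (P e) (P e')) ∧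
    (∀ v v', v ≠ v' → ∀ x ∈ B v, ∀ y ∈ B v', K ≤ dist x y) ∧
    (∀ e ∈ H.edgeSet, ∀ e' ∈ H.edgeSet, e ≠ e' → ∀ x ∈ P e, ∀ y ∈ P e', K ≤ dist x y) ∧
    (∀ u w, H.Adj u w → ∀ v, v ≠ u → v ≠ w → ∀ x ∈ P s(u, w), ∀ y ∈ B v, K ≤ dist x y)

/-- `X` has `H` as an asymptotic minor if it has a `K`-fat `H`-minor for every `K > 0`. -/
def HasAsymptoticMinor {W : Type*} (H : SimpleGraph W) (X : Type*) [MetricSpace X] : Prop :=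
  ∀ K : ℝ, 0 < K → HasMetricFatMinor H X K
/-- `Δ'` is a subdivision of `Δ`: `Δ'` is obtained from `Δ` by replacing the edges of `Δ`
by internally disjoint paths between the (injectively embedded) branch vertices, these
paths avoiding branch vertices internally and covering all vertices and edges of `Δ'`. -/
def IsSubdivisionOf {W' W : Type*} (Δ' : SimpleGraph W') (Δ : SimpleGraph W) : Prop :=
  ∃ (φ : W → W') (P : ∀ u v : W, Δ.Adj u v → Δ'.Walk (φ u) (φ v)),
    Function.Injective φ ∧
    (∀ u v (h : Δ.Adj u v), (P u v h).IsPath) ∧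
    (∀ u v (h : Δ.Adj u v), (P v u h.symm).support = (P u v h).support.reverse) ∧
    (∀ u v (h : Δ.Adj u v), ∀ w, w ∈ (P u v h).support → w ∈ Set.range φ →
      w = φ u ∨ w = φ v) ∧
    (∀ u v u' v' (h : Δ.Adj u v) (h' : Δ.Adj u' v'), s(u, v) ≠ s(u', v') →
      ∀ w, w ∈ (P u v h).support → w ∈ (P u' v' h').support →
        ((w = φ u ∨ w = φ v) ∧ (w = φ u' ∨ w = φ v'))) ∧
    (∀ w : W', w ∈ Set.range φ ∨ ∃ u, ∃ v, ∃ h : Δ.Adj u v, w ∈ (P u v h).support) ∧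
    (∀ e ∈ Δ'.edgeSet, ∃ u, ∃ v, ∃ h : Δ.Adj u v, e ∈ (P u v h).edges)

/-! ### Arcs in paths -/

open Set unitInterval in
/-- A path whose fibres are intervals can be reparametrised injectively. The new parameter `g t` is
a summable combination, over a dense sequence of times `r`, of the running maxima on `[r, t]` of
the distance to `q r`: it is monotone and has the same fibres as `q`. -/
lemma arc_of_monotone_fibres {X : Type*} [MetricSpace X] (q : I → X) (hq : Continuous q)
    (hfib : ∀ s t u, s ≤ t → t ≤ u → q s = q u → q t = q s) (h01 : q 0 ≠ q 1) :
    IsArcIn (range q) (q 0) (q 1) := by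
  -- `G r t` is the running maximum on `[r, t]` of the distance to `q r`
  let F : I → I → I → ℝ := fun r t s => dist (q (max r (min s t))) (q r)
  let G : I → I → ℝ := fun r t => sSup (F r t '' univ)
  obtain ⟨D, hD⟩ := (isCompact_range hq).isBounded.subset_closedBall (q 0)
  have hF0 : ∀ r t s, 0 ≤ F r t s := fun r t s => dist_nonneg
  have hFD : ∀ r t s, F r t s ≤ D + D := fun r t s => by
    refine (dist_triangle_right _ _ (q 0)).trans (add_le_add ?_ ?_)
    · exact hD ⟨_, rfl⟩
    · exact hD ⟨_, rfl⟩
  have hbdd : ∀ r t, BddAbove (F r t '' univ) := fun r t =>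
    ⟨D + D, by rintro _ ⟨s, -, rfl⟩; exact hFD r t s⟩
  have hle : ∀ r t s, F r t s ≤ G r t := fun r t s => le_csSup (hbdd r t) ⟨s, mem_univ _, rfl⟩
  have hG0 : ∀ r t, 0 ≤ G r t := fun r t => (hF0 r t 0).trans (hle r t 0)
  have hGD : ∀ r t, G r t ≤ D + D := fun r t =>
    csSup_le ⟨_, 0, mem_univ _, rfl⟩ (by rintro _ ⟨s, -, rfl⟩; exact hFD r t s)
  have hGmono : ∀ r, Monotone (G r) := fun r t t' htt =>
    csSup_le ⟨_, 0, mem_univ _, rfl⟩ (by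
      rintro _ ⟨s, -, rfl⟩
      have : F r t s = F r t' (min s t) := by
        simp only [F]; rw [min_eq_left (b := t') ((min_le_right _ _).trans htt)]
      rw [this]; exact hle _ _ _)
  have hGcont : ∀ r, Continuous (G r) := fun r => by
    refine isCompact_univ.continuous_sSup ?_
    simp only [F, Function.HasUncurry.uncurry, id]
    fun_prop
  have hGzero : ∀ r t, t ≤ r → G r t = 0 := fun r t htr => by
    refine le_antisymm (csSup_le ⟨_, 0, mem_univ _, rfl⟩ ?_) (hG0 r t)
    rintro _ ⟨s, -, rfl⟩
    simp only [F]
    rw [max_eq_left ((min_le_right _ _).trans htr), dist_self]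
  have hGeq : ∀ r s t, s ≤ t → q s = q t → G r s = G r t := fun r s t hst hqst => by
    have hc : ∀ z, s ≤ z → z ≤ t → q z = q s := fun z h1 h2 => hfib s z t h1 h2 hqst
    have : F r s = F r t := by
      funext z
      simp only [F]
      congr 1
      rcases le_total z s with hz | hz
      · rw [min_eq_left hz, min_eq_left (hz.trans hst)]
      · rw [min_eq_right hz]
        rcases le_total t r with htr | htr
        · rw [max_eq_left (hst.trans htr), max_eq_left ((min_le_right _ _).trans htr)]
        · rw [hc _ (le_max_right _ _) (max_le htr hst),
            hc _ (le_max_of_le_right (le_min hz hst)) (max_le htr (min_le_right _ _))]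
    simp only [G, this]
  let ρ : ℕ → I := TopologicalSpace.denseSeq I
  let g : I → ℝ := fun t => ∑' n, (1 / 2 : ℝ) ^ n * G (ρ n) t
  have hsumD : Summable fun n : ℕ => (1 / 2 : ℝ) ^ n * (D + D) :=
    summable_geometric_two.mul_right _
  have hbound : ∀ n t, (1 / 2 : ℝ) ^ n * G (ρ n) t ≤ (1 / 2 : ℝ) ^ n * (D + D) := fun n t =>
    mul_le_mul_of_nonneg_left (hGD _ _) (by positivity)
  have hnn : ∀ n t, 0 ≤ (1 / 2 : ℝ) ^ n * G (ρ n) t := fun n t =>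
    mul_nonneg (by positivity) (hG0 _ _)
  have hsum : ∀ t, Summable fun n : ℕ => (1 / 2 : ℝ) ^ n * G (ρ n) t := fun t =>
    Summable.of_nonneg_of_le (fun n => hnn n t) (fun n => hbound n t) hsumD
  have hgcont : Continuous g := by
    refine continuous_tsum (fun n => continuous_const.mul (hGcont _)) hsumD fun n t => ?_
    rw [Real.norm_of_nonneg (hnn n t)]; exact hbound n t
  have hgmono : Monotone g := fun s t hst =>
    (hsum s).tsum_le_tsum (fun n => mul_le_mul_of_nonneg_left (hGmono _ hst) (by positivity))
      (hsum t)
  have hglt : ∀ s t, s < t → q s ≠ q t → g s < g t := by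
    intro s t hst hne
    -- close to `s` from the right, `q` still differs from `q t`
    have hopen : {z | q z ≠ q t} ∈ nhdsWithin s (Ici s) :=
      mem_nhdsWithin_of_mem_nhds ((isOpen_ne_fun hq continuous_const).mem_nhds hne)
    obtain ⟨u, hu, hsub⟩ := (mem_nhdsGE_iff_exists_mem_Ioc_Ico_subset hst).1 hopen
    obtain ⟨n, hn⟩ := (TopologicalSpace.denseRange_denseSeq I).exists_mem_open isOpen_Ioo
      (nonempty_Ioo.2 hu.1)
    have hnt : ρ n < t := hn.2.trans_le hu.2
    refine (hsum s).tsum_lt_tsum (i := n)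
      (fun n => mul_le_mul_of_nonneg_left (hGmono _ hst.le) (by positivity)) ?_ (hsum t)
    refine mul_lt_mul_of_pos_left ?_ (by positivity)
    rw [hGzero _ _ hn.1.le]
    refine lt_of_lt_of_le ?_ (hle _ t t)
    simp only [F]
    rw [min_self, max_eq_right hnt.le]
    exact dist_pos.2 (Ne.symm (hsub ⟨hn.1.le, hn.2⟩))
  have hgeq : ∀ s t, g s = g t ↔ q s = q t := by
    have : ∀ s t, s ≤ t → (g s = g t ↔ q s = q t) := fun s t hst => by
      constructor
      · intro h
        by_contra hne
        rcases hst.eq_or_lt with rfl | hlt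
        · exact hne rfl
        · exact (hglt s t hlt hne).ne h
      · intro h
        exact tsum_congr fun n => by rw [hGeq _ s t hst h]
    intro s t
    rcases le_total s t with h | h
    · exact this s t h
    · rw [eq_comm, this t s h, eq_comm]
  have hpos : 0 < g 1 - g 0 := sub_pos.2 (hglt 0 1 zero_lt_one h01)
  let h : I → I := fun t => ⟨(g t - g 0) / (g 1 - g 0),
    div_nonneg (sub_nonneg.2 (hgmono nonneg')) hpos.le,
    (div_le_one hpos).2 (sub_le_sub_right (hgmono le_one') _)⟩
  have hhcont : Continuous h :=
    Continuous.subtype_mk ((hgcont.sub continuous_const).div_const _) _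
  have hh0 : h 0 = 0 := Subtype.ext (by simp [h])
  have hh1 : h 1 = 1 := Subtype.ext (by simp [h, hpos.ne'])
  have hheq : ∀ s t, h s = h t ↔ q s = q t := fun s t => by
    rw [← hgeq]
    have : h s = h t ↔ (g s - g 0) / (g 1 - g 0) = (g t - g 0) / (g 1 - g 0) := Subtype.ext_iff
    rw [this, div_left_inj' hpos.ne', sub_left_inj]
  have hsurj : Function.Surjective h := fun z => by
    have := intermediate_value_univ 0 1 hhcont
    rw [hh0, hh1] at this
    exact this ⟨nonneg', le_one'⟩
  have hquot := Topology.IsQuotientMap.of_surjective_continuous hsurj hhcont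
  choose τ hτ using hsurj
  have hqτ : ∀ t, q (τ (h t)) = q t := fun t => (hheq _ _).1 (hτ _)
  have hcont : Continuous (q ∘ τ) := by
    rw [hquot.continuous_iff]
    have : (q ∘ τ) ∘ h = q := funext hqτ
    rwa [this]
  refine ⟨⟨⟨q ∘ τ, hcont⟩, ?_, ?_⟩, ?_, ?_⟩
  · have := hqτ 0; rwa [hh0] at this
  · have := hqτ 1; rwa [hh1] at this
  · intro z w hzw
    have := (hheq _ _).2 (show q (τ z) = q (τ w) from hzw)
    rwa [hτ, hτ] at this
  · apply Subset.antisymm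
    · rintro _ ⟨z, rfl⟩; exact ⟨τ z, rfl⟩
    · rintro _ ⟨t, rfl⟩; exact ⟨h t, hqτ t⟩

open Set unitInterval in
/-- A path between two distinct points contains an arc between them. -/
lemma exists_arc {X : Type*} [MetricSpace X] {x y : X} (p : Path x y) (hxy : x ≠ y) :
    ∃ A ⊆ range p, IsArcIn A x y := by
  let 𝓕 : Set (Set I) := {C | IsClosed C ∧ 0 ∈ C ∧ 1 ∈ C ∧
    ∀ a ∈ C, ∀ b ∈ C, a < b → Ioo a b ∩ C = ∅ → p a = p b}
  have huniv : (univ : Set I) ∈ 𝓕 := by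
    refine ⟨isClosed_univ, mem_univ _, mem_univ _, fun a _ b _ hab h => ?_⟩
    rw [inter_univ] at h
    exact absurd h (nonempty_Ioo.2 hab).ne_empty
  have hchain : ∀ c ⊆ 𝓕, IsChain (· ⊆ ·) c → c.Nonempty → ∃ lb ∈ 𝓕, ∀ s ∈ c, lb ⊆ s := by
    intro c hc hch hne
    refine ⟨⋂₀ c, ⟨isClosed_sInter fun C hC => (hc hC).1, fun C hC => (hc hC).2.1,
      fun C hC => (hc hC).2.2.1, ?_⟩, fun s hs => sInter_subset_of_mem hs⟩
    intro a ha b hb hab hgap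
    by_contra hpne
    obtain ⟨U, V, hU, hV, haU, hbV, hUV⟩ := t2_separation hpne
    have hU' : p ⁻¹' U ∈ nhdsWithin a (Ici a) :=
      mem_nhdsWithin_of_mem_nhds ((hU.preimage p.continuous).mem_nhds haU)
    have hV' : p ⁻¹' V ∈ nhdsWithin b (Iic b) :=
      mem_nhdsWithin_of_mem_nhds ((hV.preimage p.continuous).mem_nhds hbV)
    obtain ⟨a', ha', hsubU⟩ := (mem_nhdsGE_iff_exists_mem_Ioc_Ico_subset hab).1 hU'
    obtain ⟨b', hb', hsubV⟩ := (mem_nhdsLE_iff_exists_mem_Ico_Ioc_subset hab).1 hV'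
    have hab' : a' ≤ b' := by
      by_contra! hlt
      obtain ⟨z, hz1, hz2⟩ := exists_between hlt
      exact disjoint_left.1 hUV (hsubU ⟨hb'.1.trans hz1.le, hz2⟩)
        (hsubV ⟨hz1, hz2.le.trans ha'.2⟩)
    -- by compactness a member of the chain already misses `[a', b']`
    obtain ⟨C, hC, hCmiss⟩ : ∃ C ∈ c, Icc a' b' ∩ C = ∅ := by
      by_contra! hcon
      have hnon : (⋂ C : c, Icc a' b' ∩ (C : Set I)).Nonempty := by
        have : Nonempty c := hne.to_subtype
        refine IsCompact.nonempty_iInter_of_directed_nonempty_isCompact_isClosed _ ?_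
          (fun C => hcon C C.2) (fun C => isCompact_Icc.inter_right (hc C.2).1)
          (fun C => isClosed_Icc.inter (hc C.2).1)
        intro C C'
        rcases hch.total C.2 C'.2 with h | h
        · exact ⟨C, subset_rfl, inter_subset_inter_right _ h⟩
        · exact ⟨C', inter_subset_inter_right _ h, subset_rfl⟩
      obtain ⟨z, hz⟩ := hnon
      rw [mem_iInter] at hz
      obtain ⟨C₀, hC₀⟩ := hne
      have hz0 := (hz ⟨C₀, hC₀⟩).1
      have : z ∈ Ioo a b ∩ ⋂₀ c :=
        ⟨⟨ha'.1.trans_le hz0.1, hz0.2.trans_lt hb'.2⟩, fun C hC => (hz ⟨C, hC⟩).2⟩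
      rw [hgap] at this
      exact this
    have hmiss : ∀ z ∈ C, a' ≤ z → z ≤ b' → False := fun z hz h1 h2 => by
      have : z ∈ Icc a' b' ∩ C := ⟨⟨h1, h2⟩, hz⟩
      rw [hCmiss] at this; exact this
    obtain ⟨a₀, ⟨ha₀C, ha₀⟩, hmax⟩ :=
      ((hc hC).1.isCompact.inter_right (isClosed_Icc (a := a) (b := a'))).exists_isGreatest
        ⟨a, ha C hC, le_rfl, ha'.1.le⟩
    obtain ⟨b₀, ⟨hb₀C, hb₀⟩, hmin⟩ :=
      ((hc hC).1.isCompact.inter_right (isClosed_Icc (a := b') (b := b))).exists_isLeast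
        ⟨b, hb C hC, hb'.2.le, le_rfl⟩
    have h1 : a₀ < a' := lt_of_not_ge fun h => hmiss a₀ ha₀C h (ha₀.2.trans hab')
    have h2 : b' < b₀ := lt_of_not_ge fun h => hmiss b₀ hb₀C (hab'.trans hb₀.1) h
    have heq := (hc hC).2.2.2 a₀ ha₀C b₀ hb₀C (h1.trans (hab'.trans_lt h2)) (by
      ext z
      simp only [mem_inter_iff, mem_Ioo, mem_empty_iff_false, iff_false]
      rintro ⟨⟨hz1, hz2⟩, hzC⟩
      rcases le_or_gt z a' with h | h
      · exact (hmax ⟨hzC, ha₀.1.trans hz1.le, h⟩).not_gt hz1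
      rcases le_or_gt b' z with h' | h'
      · exact (hmin ⟨hzC, h', hz2.le.trans hb₀.2⟩).not_gt hz2
      · exact hmiss z hzC h.le h'.le)
    exact disjoint_left.1 hUV (hsubU ⟨ha₀.1, h1⟩) (heq ▸ hsubV ⟨h2, hb₀.2⟩)
  obtain ⟨C, -, hCmin⟩ := zorn_superset_nonempty 𝓕 hchain univ huniv
  obtain ⟨hCcl, hC0, hC1, hCgap⟩ := hCmin.prop
  -- minimality: points of `C` with equal image bound a gap of `C`
  have hinj : ∀ s ∈ C, ∀ t ∈ C, s < t → p s = p t → ∀ z ∈ C, s < z → z < t → False := by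
    intro s hs t ht hst hpst z hz hsz hzt
    have hmem : C \ Ioo s t ∈ 𝓕 := by
      refine ⟨hCcl.sdiff isOpen_Ioo, ⟨hC0, fun h => not_lt_bot h.1⟩,
        ⟨hC1, fun h => not_top_lt h.2⟩, ?_⟩
      intro a ha b hb hab hgap
      by_cases hg : Ioo a b ∩ C = ∅
      · exact hCgap a ha.1 b hb.1 hab hg
      obtain ⟨w, ⟨hw1, hw2⟩, hwC⟩ := nonempty_iff_ne_empty.2 hg
      have hno : ∀ v ∈ C \ Ioo s t, a < v → v < b → False := fun v hv h1 h2 => by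
        have : v ∈ Ioo a b ∩ (C \ Ioo s t) := ⟨⟨h1, h2⟩, hv⟩
        rw [hgap] at this; exact this
      have hw : w ∈ Ioo s t := by
        by_contra h; exact hno w ⟨hwC, h⟩ hw1 hw2
      have hsa : s ≤ a := le_of_not_gt fun h =>
        hno s ⟨hs, fun h' => lt_irrefl _ h'.1⟩ h (hw.1.trans hw2)
      have htb : b ≤ t := le_of_not_gt fun h =>
        hno t ⟨ht, fun h' => lt_irrefl _ h'.2⟩ (hw1.trans hw.2) h
      have ha' : a = s := le_antisymm (le_of_not_gt fun h => ha.2 ⟨h, hw1.trans hw.2⟩) hsa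
      have hb' : b = t := le_antisymm htb (le_of_not_gt fun h => hb.2 ⟨hw.1.trans hw2, h⟩)
      rw [ha', hb', hpst]
    exact (hCmin.le_of_le hmem sdiff_subset hz).2 ⟨hsz, hzt⟩
  have hπ : ∀ t : I, ∃ c, IsGreatest (C ∩ Iic t) c := fun t =>
    (hCcl.isCompact.inter_right isClosed_Iic).exists_isGreatest ⟨0, hC0, nonneg'⟩
  choose π hπ using hπ
  have hπC : ∀ t, π t ∈ C := fun t => (hπ t).1.1
  have hπle : ∀ t, π t ≤ t := fun t => (hπ t).1.2
  have hπmax : ∀ t, ∀ c ∈ C, c ≤ t → c ≤ π t := fun t c hc h => (hπ t).2 ⟨hc, h⟩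
  have hπid : ∀ t ∈ C, π t = t := fun t ht => le_antisymm (hπle t) (hπmax t t ht le_rfl)
  -- `E` is the closed relation that no point of `C` lies strictly between `t` and `c ∈ C`
  let E : Set (I × I) := {z | z.2 ∈ C ∧ ∀ d ∈ C, ¬ (z.1 < d ∧ d < z.2) ∧ ¬ (z.2 < d ∧ d < z.1)}
  have hE : IsClosed E := by
    have : E = (Prod.snd ⁻¹' C) ∩ ⋂ d ∈ C, ({z : I × I | z.1 < d ∧ d < z.2}ᶜ ∩
        {z : I × I | z.2 < d ∧ d < z.1}ᶜ) := by
      ext z; simp [E]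
    rw [this]
    refine (hCcl.preimage continuous_snd).inter (isClosed_biInter fun d _ => IsClosed.inter ?_ ?_)
    · exact ((isOpen_lt continuous_fst continuous_const).inter
        (isOpen_lt continuous_const continuous_snd)).isClosed_compl
    · exact ((isOpen_lt continuous_snd continuous_const).inter
        (isOpen_lt continuous_const continuous_fst)).isClosed_compl
  have hEπ : ∀ t, (t, π t) ∈ E := fun t => ⟨hπC t, fun d hd =>
    ⟨fun h => (hπle t).not_gt (h.1.trans h.2), fun h => (hπmax t d hd h.2.le).not_gt h.1⟩⟩
  have hEp : ∀ t c, (t, c) ∈ E → p c = p (π t) := by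
    rintro t c ⟨hc, hno⟩
    rcases le_or_gt c t with h | h
    · have h1 := hπmax t c hc h
      rcases h1.eq_or_lt with h1 | h1
      · rw [h1]
      refine hCgap c hc _ (hπC t) h1 ?_
      ext z
      simp only [mem_inter_iff, mem_Ioo, mem_empty_iff_false, iff_false]
      rintro ⟨⟨hz1, hz2⟩, hzC⟩
      exact (hno z hzC).2 ⟨hz1, hz2.trans_le (hπle t)⟩
    · refine (hCgap _ (hπC t) c hc ((hπle t).trans_lt h) ?_).symm
      ext z
      simp only [mem_inter_iff, mem_Ioo, mem_empty_iff_false, iff_false]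
      rintro ⟨⟨hz1, hz2⟩, hzC⟩
      exact (hno z hzC).1 ⟨lt_of_not_ge fun hzt => (hπmax t z hzC hzt).not_gt hz1, hz2⟩
  have hqcont : Continuous (fun t => p (π t)) := by
    rw [continuous_iff_isClosed]
    intro S hS
    have : (fun t => p (π t)) ⁻¹' S = Prod.fst '' (E ∩ Prod.snd ⁻¹' (p ⁻¹' S)) := by
      ext t
      constructor
      · intro h; exact ⟨(t, π t), ⟨hEπ t, h⟩, rfl⟩
      · rintro ⟨⟨t', c⟩, ⟨h1, h2⟩, rfl⟩
        show p (π t') ∈ S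
        rw [← hEp _ _ h1]; exact h2
    rw [this]
    exact ((hE.inter ((hS.preimage p.continuous).preimage continuous_snd)).isCompact.image
      continuous_fst).isClosed
  have hq0 : p (π 0) = x := by rw [hπid 0 hC0, p.source]
  have hq1 : p (π 1) = y := by rw [hπid 1 hC1, p.target]
  have harc := arc_of_monotone_fibres (fun t => p (π t)) hqcont (by
    intro s t u hst htu h
    have h1 : π s ≤ π t := hπmax t _ (hπC s) ((hπle s).trans hst)
    have h2 : π t ≤ π u := hπmax u _ (hπC t) ((hπle t).trans htu)
    rcases h1.eq_or_lt with h1 | h1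
    · simp only [h1]
    rcases h2.eq_or_lt with h2 | h2
    · simp only [h2, h]
    exact (hinj _ (hπC s) _ (hπC u) (h1.trans h2) h _ (hπC t) h1 h2).elim)
    (by simpa only [hq0, hq1] using hxy)
  simp only [hq0, hq1] at harc
  exact ⟨_, by rintro _ ⟨t, rfl⟩; exact ⟨π t, rfl⟩, harc⟩

/-! ### Chains in length spaces -/

/-- The sets `A` and `B` are at distance at least `K`. -/
def Far {X : Type*} [MetricSpace X] (K : ℝ) (A B : Set X) : Prop :=
  ∀ x ∈ A, ∀ y ∈ B, K ≤ dist x y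

section Far
variable {X : Type*} [MetricSpace X]

lemma Far.symm {K : ℝ} {A B : Set X} (h : Far K A B) : Far K B A := fun x hx y hy => by
  rw [dist_comm]; exact h y hy x hx

lemma Far.mono {K L : ℝ} {A B A' B' : Set X} (h : Far K A B) (hL : L ≤ K) (hA : A' ⊆ A)
    (hB : B' ⊆ B) : Far L A' B' := fun x hx y hy => hL.trans (h x (hA hx) y (hB hy))

lemma Far.disjoint {K : ℝ} {A B : Set X} (h : Far K A B) (hK : 0 < K) : Disjoint A B :=
  Set.disjoint_left.2 fun x hx hy => by
    have := h x hx x hy; rw [dist_self] at this; linarith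

lemma Far.thickening_left {K R : ℝ} {A B : Set X} (h : Far K A B) :
    Far (K - R) (Metric.thickening R A) B := fun x hx y hy => by
  obtain ⟨z, hz, hxz⟩ := Metric.mem_thickening_iff.1 hx
  have := h z hz y hy
  have := dist_triangle_left z y x
  linarith

lemma Far.thickening {K R R' : ℝ} {A B : Set X} (h : Far K A B) :
    Far (K - R - R') (Metric.thickening R A) (Metric.thickening R' B) :=
  (h.thickening_left.symm.thickening_left).symm

lemma Far.closure_right {K : ℝ} {A B : Set X} (h : Far K A B) : Far K A (closure B) :=
  fun x hx y hy => by
    have hcl : IsClosed {y | K ≤ dist x y} := isClosed_le continuous_const (by fun_prop)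
    exact closure_minimal (fun y hy => h x hx y hy) hcl hy

lemma Far.biUnion {ι κ : Type*} {K : ℝ} {s : Set ι} {t : Set κ} {A : ι → Set X} {B : κ → Set X}
    (h : ∀ i ∈ s, ∀ j ∈ t, Far K (A i) (B j)) : Far K (⋃ i ∈ s, A i) (⋃ j ∈ t, B j) := by
  intro x hx y hy
  simp only [Set.mem_iUnion] at hx hy
  obtain ⟨i, hi, hx⟩ := hx
  obtain ⟨j, hj, hy⟩ := hy
  exact h i hi j hj x hx y hy

lemma Far.union_left {K : ℝ} {A A' B : Set X} (h : Far K A B) (h' : Far K A' B) :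
    Far K (A ∪ A') B := fun x hx y hy => hx.elim (fun hx => h x hx y hy) (fun hx => h' x hx y hy)

lemma Far.union_right {K : ℝ} {A B B' : Set X} (h : Far K A B) (h' : Far K A B') :
    Far K A (B ∪ B') := (h.symm.union_left h'.symm).symm

end Far

section LengthSpace
variable {X : Type*} [MetricSpace X]

/-- Almost-geodesics exist: passing through two points of such a path, in order, is at most `ε`
longer than the distance of its endpoints. -/
lemma IsLengthSpace.exists_path (hX : IsLengthSpace X) (x y : X) {ε : ℝ} (hε : 0 < ε) :
    ∃ p : Path x y, ∀ s t, s ≤ t →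
      dist x (p s) + dist (p s) (p t) + dist (p t) y ≤ dist x y + ε := by
  obtain ⟨p, hp⟩ := hX x y ε hε
  refine ⟨p, fun s t hst => ?_⟩
  have h1 := eVariationOn.Icc_add_Icc (fun t => p t) (s := Set.univ)
    (unitInterval.nonneg' (t := s)) hst (Set.mem_univ _)
  have h2 := eVariationOn.Icc_add_Icc (fun t => p t) (s := Set.univ)
    (unitInterval.nonneg' (t := t)) (unitInterval.le_one' (t := t)) (Set.mem_univ _)
  have e : ∀ a b : unitInterval, a ≤ b → edist (p a) (p b) ≤
      eVariationOn (fun t => p t) (Set.univ ∩ Set.Icc a b) := fun a b hab =>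
    eVariationOn.edist_le (fun t => p t) ⟨Set.mem_univ _, le_rfl, hab⟩ ⟨Set.mem_univ _, hab, le_rfl⟩
  have h3 : edist x (p s) + edist (p s) (p t) + edist (p t) y ≤ ENNReal.ofReal (dist x y + ε) := by
    refine le_trans ?_ hp
    calc edist x (p s) + edist (p s) (p t) + edist (p t) y
        = edist (p 0) (p s) + edist (p s) (p t) + edist (p t) (p 1) := by
          rw [p.source, p.target]
      _ ≤ _ := add_le_add (add_le_add (e 0 s unitInterval.nonneg') (e s t hst))
          (e t 1 unitInterval.le_one')
      _ = eVariationOn (fun t => p t) (Set.univ ∩ Set.Icc 0 1) := by rw [h1, h2]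
      _ ≤ _ := eVariationOn.mono _ (Set.subset_univ _)
  rw [edist_dist, edist_dist, edist_dist, ← ENNReal.ofReal_add dist_nonneg dist_nonneg,
    ← ENNReal.ofReal_add (by positivity) dist_nonneg] at h3
  exact (ENNReal.ofReal_le_ofReal_iff (by positivity)).1 h3

lemma IsLengthSpace.locallyPathConnectedSpace (hX : IsLengthSpace X) :
    LocallyPathConnectedSpace X := by
  refine .of_bases (fun x => Metric.nhds_basis_ball) fun x r hr => ?_
  refine ⟨x, Metric.mem_ball_self hr, fun {y} hy => ?_⟩
  rw [Metric.mem_ball, dist_comm] at hy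
  obtain ⟨p, hp⟩ := hX.exists_path x y (sub_pos.2 hy)
  refine ⟨p, fun t => Metric.mem_ball'.2 ?_⟩
  by_cases ht : p t = y
  · rw [ht]; exact hy
  · have := hp t t le_rfl
    have := dist_pos.2 ht
    have := dist_self (p t)
    linarith

lemma IsLengthSpace.isPathConnected_thickening (hX : IsLengthSpace X) {B : Set X}
    (hB : IsConnected B) {r : ℝ} (hr : 0 < r) : IsPathConnected (Metric.thickening r B) := by
  have := hX.locallyPathConnectedSpace
  rw [← Metric.isOpen_thickening.isConnected_iff_isPathConnected]
  obtain ⟨b, hb⟩ := hB.nonempty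
  have hsub := Metric.self_subset_thickening hr B
  refine ⟨⟨b, hsub hb⟩, isPreconnected_of_forall b fun y hy => ?_⟩
  obtain ⟨z, hz, hyz⟩ := Metric.mem_thickening_iff.1 hy
  have hball : IsPathConnected (Metric.ball z r) := by
    refine ⟨z, Metric.mem_ball_self hr, fun {y} hy => ?_⟩
    rw [Metric.mem_ball, dist_comm] at hy
    obtain ⟨p, hp⟩ := hX.exists_path z y (sub_pos.2 hy)
    refine ⟨p, fun t => Metric.mem_ball'.2 ?_⟩
    by_cases ht : p t = y
    · rw [ht]; exact hy
    · have := hp t t le_rfl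
      have := dist_pos.2 ht
      have := dist_self (p t)
      linarith
  exact ⟨B ∪ Metric.ball z r, Set.union_subset hsub (Metric.ball_subset_thickening hz r),
    Or.inl hb, Or.inr hyz,
    hB.isPreconnected.union z hz (Metric.mem_ball_self hr) hball.isConnected.isPreconnected⟩

open Metric Set in
/-- A path from `B` to a distant set `B'` can be replaced, up to bounded distance, by a path
along which the distance to `B` is almost non-decreasing until it exceeds `R`: one follows an
almost-geodesic from `B` to the last point of the path at distance `R` from `B`, and the path
itself from there on. -/
lemma IsLengthSpace.exists_escaping_path (hX : IsLengthSpace X) {B B' S : Set X} {R : ℝ}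
    (hR : 0 ≤ R) {K : ℝ} (hRK : R < K) (hfar : Far K B B') {a b : X} (ha : a ∈ B) (hb : b ∈ B')
    (hab : JoinedIn S a b) :
    ∃ ω : ℝ → X, Continuous ω ∧ ∃ α β, α ≤ β ∧ ω α ∈ B ∧ ω β ∈ B' ∧
      (∀ t, ω t ∈ thickening (R + 2) S) ∧
      ∀ s t, s ≤ t → min (infDist (ω s) B) R ≤ infDist (ω t) B + 1 := by
  obtain ⟨γ, hγ⟩ := hab
  have hBne : B.Nonempty := ⟨a, ha⟩
  have hucont : Continuous fun t => infDist (γ t) B := (continuous_infDist_pt B).comp γ.continuous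
  obtain ⟨t₁, ht₁, hmax⟩ : ∃ t₁, IsGreatest {t | infDist (γ t) B ≤ R} t₁ :=
    (isClosed_le hucont continuous_const).isCompact.exists_isGreatest
      ⟨0, by rw [mem_ofPred, γ.source, infDist_zero_of_mem ha]; exact hR⟩
  have hbB : K ≤ infDist b B := (le_infDist hBne).2 fun y hy => hfar.symm b hb y hy
  have hRt : infDist (γ t₁) B = R := by
    have hivt := intermediate_value_Icc (unitInterval.le_one' (t := t₁)) hucont.continuousOn
    obtain ⟨t, ht, hte⟩ := hivt ⟨ht₁, by rw [γ.target]; linarith⟩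
    have : t = t₁ := le_antisymm (hmax hte.le) ht.1
    rw [← this]; exact hte
  have hge : ∀ t, t₁ ≤ t → R ≤ infDist (γ t) B := fun t ht => by
    rcases ht.eq_or_lt with rfl | h
    · exact hRt.ge
    · exact le_of_not_ge fun h' => (hmax h').not_gt h
  obtain ⟨y, hyB, hy⟩ := (infDist_lt_iff (x := γ t₁) (r := R + 1 / 2) hBne).1
    (by rw [hRt]; linarith)
  rw [dist_comm] at hy
  obtain ⟨G, hG⟩ := hX.exists_path y (γ t₁) (ε := 1 / 2) (by norm_num)
  let ω : ℝ → X := fun t => if t ≤ t₁ then G.extend (t - t₁ + 1) else γ.extend t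
  have hω1 : ∀ t : ℝ, t ≤ t₁ → ∃ z : unitInterval, z = projIcc 0 1 zero_le_one (t - t₁ + 1) ∧
      ω t = G z := fun t ht => ⟨_, rfl, if_pos ht⟩
  have hω2 : ∀ t : ℝ, t₁ < t → ∃ z : unitInterval, t₁ ≤ z ∧ ω t = γ z := fun t ht =>
    ⟨projIcc 0 1 zero_le_one t, by
      have := monotone_projIcc (zero_le_one' ℝ) ht.le
      rwa [projIcc_val] at this, if_neg ht.not_ge⟩
  refine ⟨ω, ?_, t₁ - 1, 1, ?_, ?_, ?_, ?_, ?_⟩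
  · refine Continuous.if_le (by fun_prop) (by fun_prop) continuous_id continuous_const ?_
    intro t ht
    have ht' : t = t₁ := ht
    subst ht'
    simp
  · have := t₁.2.2; linarith
  · have : ω (t₁ - 1) = y := by simp [ω]
    rw [this]; exact hyB
  · have : ω 1 = b := by
      rcases t₁.2.2.eq_or_lt with h | h
      · have h1 : t₁ = 1 := Subtype.ext h
        simp [ω, h1]
      · simp [ω, not_le.2 h]
    rw [this]; exact hb
  · intro t
    rw [mem_thickening_iff]
    rcases le_or_gt t t₁ with ht | ht
    · obtain ⟨z, -, hz⟩ := hω1 t ht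
      refine ⟨γ t₁, hγ _, ?_⟩
      have := hG z z le_rfl
      have := dist_nonneg (x := y) (y := G z)
      rw [hz]
      have := dist_self (G z)
      linarith
    · obtain ⟨z, -, hz⟩ := hω2 t ht
      refine ⟨γ z, hγ _, ?_⟩
      rw [hz, dist_self]; linarith
  · intro s t hst
    rcases le_or_gt t t₁ with ht | ht
    · obtain ⟨z, hz, hz'⟩ := hω1 t ht
      obtain ⟨w, hw, hw'⟩ := hω1 s (hst.trans ht)
      have hwz : w ≤ z := by
        rw [hz, hw]; exact monotone_projIcc _ (by linarith)
      have h1 := hG w z hwz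
      have h2 : infDist (G w) B ≤ dist (G w) y := infDist_le_dist_of_mem hyB
      have h3 : infDist (γ t₁) B ≤ infDist (G z) B + dist (γ t₁) (G z) := infDist_le_infDist_add_dist
      rw [dist_comm] at h2 h3
      have h4 := dist_nonneg (x := G w) (y := G z)
      rw [hz', hw']
      refine (min_le_left _ _).trans ?_
      linarith
    · obtain ⟨z, hz, hz'⟩ := hω2 t ht
      have := hge z hz
      rw [hz']
      refine (min_le_right _ _).trans ?_
      linarith

open Metric Set in
/-- Two distant sets joined by a path can be linked by a chain of `M + 1` path-connected sets
near that path, in which non-consecutive members are far apart. -/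
lemma IsLengthSpace.exists_chain (hX : IsLengthSpace X) {K : ℝ} (hK : 0 ≤ K) (M : ℕ) {R K' : ℝ}
    (hR : (K + 2) * (M + 1) + 4 ≤ R) (hRK : R ≤ K') {B B' S : Set X} (hfar : Far K' B B') {a b : X}
    (ha : a ∈ B) (hb : b ∈ B') (hab : JoinedIn S a b) :
    ∃ T : ℕ → Set X, T 0 = B ∧ T (M + 2) = B' ∧
      (∀ j, 1 ≤ j → j ≤ M + 1 → IsPathConnected (T j) ∧ T j ⊆ thickening R S) ∧
      (∀ j ≤ M + 1, (T j ∩ T (j + 1)).Nonempty) ∧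
      ∀ i j, i + 2 ≤ j → j ≤ M + 2 → Far K (T i) (T j) := by
  have hM : (0 : ℝ) ≤ M := M.cast_nonneg
  have hBne : B.Nonempty := ⟨a, ha⟩
  obtain ⟨ω, hω, α, β, hαβ, hα, hβ, hnear, hmono⟩ :=
    hX.exists_escaping_path (R := (K + 2) * M + 2) (by positivity) (K := K') (by nlinarith) hfar
      ha hb hab
  let u : ℝ → ℝ := fun t => infDist (ω t) B
  have hu : Continuous u := (continuous_infDist_pt B).comp hω
  have huα : u α = 0 := infDist_zero_of_mem hα
  have hB'u : ∀ y ∈ B', K' ≤ infDist y B := fun y hy =>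
    (le_infDist hBne).2 fun z hz => hfar.symm y hy z hz
  -- `τ j` is a time at which the path is at distance `(K + 2) j` from `B`
  have hτ : ∀ j : ℕ, ∃ t ∈ Icc α β, (j ≤ M → u t = (K + 2) * j) ∧ (j = 0 → t = α) ∧
      (M < j → t = β) := by
    intro j
    rcases Nat.eq_zero_or_pos j with rfl | hj
    · exact ⟨α, ⟨le_rfl, hαβ⟩, fun _ => by rw [huα]; simp, fun _ => rfl, fun h => by omega⟩
    rcases le_or_gt j M with hjM | hjM
    · have hjM' : (j : ℝ) ≤ M := by exact_mod_cast hjM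
      obtain ⟨t, ht, hte⟩ := intermediate_value_Icc hαβ hu.continuousOn
        (show (K + 2) * (j : ℝ) ∈ Icc (u α) (u β) from
          ⟨by rw [huα]; positivity, by have := hB'u _ hβ; simp only [u]; nlinarith⟩)
      exact ⟨t, ht, fun _ => hte, fun h => by omega, fun h => by omega⟩
    · exact ⟨β, ⟨hαβ, le_rfl⟩, fun h => by omega, fun h => by omega, fun _ => rfl⟩
  choose τ hτI hτu hτ0 hτ1 using hτ
  have hτmono : ∀ j ≤ M, τ j ≤ τ (j + 1) := by
    intro j hj
    rcases hj.eq_or_lt with rfl | hj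
    · rw [hτ1 (j + 1) (Nat.lt_succ_self _)]; exact (hτI j).2
    by_contra! hlt
    have h1 := hmono _ _ hlt.le
    have h2 : infDist (ω (τ (j + 1))) B = _ := hτu (j + 1) hj
    have h3 : infDist (ω (τ j)) B = _ := hτu j hj.le
    have hj' : ((j + 1 : ℕ) : ℝ) ≤ M := by exact_mod_cast hj
    rw [h2, h3, min_eq_left (by nlinarith)] at h1
    push_cast at h1
    nlinarith
  let T : ℕ → Set X := fun j => if j = 0 then B else if j = M + 2 then B' else
    ω '' Icc (τ (j - 1)) (τ j)
  have hT0 : T 0 = B := rfl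
  have hTM : T (M + 2) = B' := by simp [T]
  have hTj : ∀ j, j ≤ M → T (j + 1) = ω '' Icc (τ j) (τ (j + 1)) := fun j hj => by
    simp only [T]
    rw [if_neg (by omega), if_neg (by omega), Nat.add_sub_cancel]
  have hupper : ∀ i ≤ M, ∀ x ∈ T i, infDist x B ≤ (K + 2) * i + 1 := by
    intro i hi x hx
    rcases Nat.eq_zero_or_pos i with rfl | hpos
    · rw [infDist_zero_of_mem (show x ∈ B from hx)]; simp
    obtain ⟨k, rfl⟩ : ∃ k, i = k + 1 := ⟨i - 1, by omega⟩
    rw [hTj k (by omega)] at hx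
    obtain ⟨t, ht, rfl⟩ := hx
    have h1 := hmono _ _ ht.2
    have h2 : infDist (ω (τ (k + 1))) B = _ := hτu (k + 1) hi
    rw [h2] at h1
    have hi' : ((k + 1 : ℕ) : ℝ) ≤ M := by exact_mod_cast hi
    rcases min_le_iff.1 h1 with h | h
    · exact h
    · nlinarith
  have hlower : ∀ j, 2 ≤ j → j ≤ M + 2 → ∀ x ∈ T j, (K + 2) * (j - 1 : ℝ) - 1 ≤ infDist x B := by
    intro j hj2 hj x hx
    rcases hj.eq_or_lt with rfl | hlt
    · rw [hTM] at hx
      have := hB'u x hx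
      push_cast
      nlinarith
    obtain ⟨k, rfl⟩ : ∃ k, j = k + 1 := ⟨j - 1, by omega⟩
    rw [hTj k (by omega)] at hx
    obtain ⟨t, ht, rfl⟩ := hx
    have h1 := hmono _ _ ht.1
    have h2 : infDist (ω (τ k)) B = _ := hτu k (by omega)
    have hk' : (k : ℝ) ≤ M := by exact_mod_cast (by omega : k ≤ M)
    rw [h2, min_eq_left (by nlinarith)] at h1
    push_cast
    linarith
  refine ⟨T, hT0, hTM, ?_, ?_, ?_⟩
  · intro j hj1 hj
    obtain ⟨k, rfl⟩ : ∃ k, j = k + 1 := ⟨j - 1, by omega⟩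
    rw [hTj k (by omega)]
    refine ⟨?_, ?_⟩
    · exact ((convex_Icc _ _).isPathConnected (nonempty_Icc.2 (hτmono k (by omega)))).image hω
    · rintro _ ⟨t, -, rfl⟩
      exact thickening_mono (by nlinarith) _ (hnear t)
  · intro j hj
    rcases Nat.eq_zero_or_pos j with rfl | hpos
    · refine ⟨ω α, hα, ?_⟩
      rw [hTj 0 (by omega)]
      exact ⟨α, ⟨(hτ0 0 rfl).le, (hτI _).1⟩, rfl⟩
    obtain ⟨k, rfl⟩ : ∃ k, j = k + 1 := ⟨j - 1, by omega⟩
    refine ⟨ω (τ (k + 1)), ?_, ?_⟩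
    · rw [hTj k (by omega)]
      exact ⟨_, ⟨hτmono k (by omega), le_rfl⟩, rfl⟩
    · rcases hj.eq_or_lt with h | h
      · have : k = M := by omega
        subst this
        rw [hTM, hτ1 _ (Nat.lt_succ_self _)]; exact hβ
      · rw [hTj (k + 1) (by omega)]
        exact ⟨_, ⟨le_rfl, hτmono (k + 1) (by omega)⟩, rfl⟩
  · intro i j hij hj x hx y hy
    have h1 := hupper i (by omega) x hx
    have h2 := hlower j (by omega) hj y hy
    have h3 : infDist y B ≤ infDist x B + dist y x := infDist_le_infDist_add_dist
    rw [dist_comm] at h3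
    have hij' : (i : ℝ) + 2 ≤ j := by exact_mod_cast hij
    nlinarith

end LengthSpace

open Set unitInterval in
/-- A path joining two disjoint closed sets contains an arc meeting them only at its endpoints. -/
lemma exists_arc_between {X : Type*} [MetricSpace X] {A B S : Set X} (hA : IsClosed A)
    (hB : IsClosed B) (hAB : Disjoint A B) {a b : X} (ha : a ∈ A) (hb : b ∈ B)
    (hab : JoinedIn S a b) :
    ∃ a' ∈ A, ∃ b' ∈ B, ∃ Z ⊆ S, IsArcIn Z a' b' ∧ Z ∩ (A ∪ B) = {a', b'} := by
  obtain ⟨p, hp⟩ := hab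
  obtain ⟨t₂, ht₂, hmin⟩ := (hB.preimage p.continuous).isCompact.exists_isLeast
    ⟨1, by rw [mem_preimage, p.target]; exact hb⟩
  obtain ⟨t₁, ⟨ht₁, ht₁₂⟩, hmax⟩ :=
    ((hA.preimage p.continuous).isCompact.inter_right (isClosed_Iic (a := t₂))).exists_isGreatest
      ⟨0, by rw [mem_preimage, p.source]; exact ha, nonneg'⟩
  have hne : p t₁ ≠ p t₂ := fun h => disjoint_left.1 hAB ht₁ (h ▸ ht₂)
  obtain ⟨Z, hZ, harc⟩ := exists_arc (p.subpath t₁ t₂) hne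
  rw [Path.range_subpath_of_le _ _ _ ht₁₂] at hZ
  refine ⟨_, ht₁, _, ht₂, Z, fun z hz => ?_, harc, ?_⟩
  · obtain ⟨t, -, rfl⟩ := hZ hz; exact hp t
  · apply Subset.antisymm
    · rintro z ⟨hz, hzAB⟩
      obtain ⟨t, ht, rfl⟩ := hZ hz
      rcases hzAB with h | h
      · left; rw [le_antisymm (hmax ⟨h, ht.2⟩) ht.1]
      · right; rw [le_antisymm ht.2 (hmin h)]; rfl
    · obtain ⟨q, -, hq⟩ := harc
      rintro z (rfl | rfl)
      · exact ⟨hq ▸ ⟨0, q.source⟩, Or.inl ht₁⟩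
      · exact ⟨hq ▸ ⟨1, q.target⟩, Or.inr ht₂⟩

/-! ### Relaxed fat minors and subdivisions -/

/-- A relaxation of fat minors: an edge only has to contain *some* path between the two
branch sets, with no condition on how its path meets them, while branch sets are path-connected. -/
def HasWeakFatMinor {W : Type*} (H : SimpleGraph W) (X : Type*) [MetricSpace X] (K : ℝ) : Prop :=
  ∃ (B : W → Set X) (S : Sym2 W → Set X),
    (∀ v, IsPathConnected (B v)) ∧
    (∀ v v', v ≠ v' → Far K (B v) (B v')) ∧
    (∀ u w, H.Adj u w → ∃ a ∈ B u, ∃ b ∈ B w, JoinedIn (S s(u, w)) a b) ∧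
    (∀ e ∈ H.edgeSet, ∀ e' ∈ H.edgeSet, e ≠ e' → Far K (S e) (S e')) ∧
    (∀ e ∈ H.edgeSet, ∀ v, v ∉ e → Far K (S e) (B v))

/-- Thickening the branch sets by `1` makes them path-connected and costs `2` in the fatness. -/
lemma HasMetricFatMinor.hasWeakFatMinor {W : Type*} {H : SimpleGraph W} {X : Type*}
    [MetricSpace X] (hX : IsLengthSpace X) {K : ℝ} (h : HasMetricFatMinor H X (K + 2)) :
    HasWeakFatMinor H X K := by
  obtain ⟨B, P, hB, -, hP, -, hBB, hPP, hPB⟩ := h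
  refine ⟨fun v => Metric.thickening 1 (B v), P,
    fun v => hX.isPathConnected_thickening (hB v) one_pos, ?_, ?_, ?_, ?_⟩
  · intro v v' hv
    exact (Far.thickening (R := 1) (R' := 1) (hBB v v' hv)).mono (by linarith) subset_rfl subset_rfl
  · intro u w huw
    obtain ⟨a, ha, b, hb, ⟨p, -, hp⟩, -⟩ := hP u w huw
    exact ⟨a, Metric.self_subset_thickening one_pos _ ha, b,
      Metric.self_subset_thickening one_pos _ hb, p, fun t => hp ▸ ⟨t, rfl⟩⟩
  · intro e he e' he' hne
    exact Far.mono (hPP e he e' he' hne) (by linarith) subset_rfl subset_rfl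
  · intro e he v hv
    induction e with
    | h u w =>
      rw [Sym2.mem_iff, not_or] at hv
      exact (Far.thickening_left (R := 1) (Far.symm (hPB u w he v hv.1 hv.2))).symm.mono
        (by linarith) subset_rfl subset_rfl

/-- The branch sets are closed, so that a first and a last meeting point of a path with them exist,
and each edge set is shrunk to an arc. -/
lemma HasWeakFatMinor.hasMetricFatMinor {W : Type*} {H : SimpleGraph W} {X : Type*}
    [MetricSpace X] {K : ℝ} (hK : 0 < K) (h : HasWeakFatMinor H X K) :
    HasMetricFatMinor H X K := by
  obtain ⟨B, S, hB, hBB, hS, hSS, hSB⟩ := h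
  have hcl : ∀ v v', v ≠ v' → Far K (closure (B v)) (closure (B v')) := fun v v' hv =>
    (hBB v v' hv).closure_right.symm.closure_right.symm
  have key : ∀ e : Sym2 W, ∃ Z : Set X, e ∈ H.edgeSet → Z ⊆ S e ∧ ∀ u w, e = s(u, w) →
      ∃ a ∈ closure (B u), ∃ b ∈ closure (B w),
        IsArcIn Z a b ∧ Z ∩ (⋃ v, closure (B v)) = {a, b} := by
    intro e
    by_cases he : e ∈ H.edgeSet
    swap
    · exact ⟨∅, fun h => absurd h he⟩
    induction e with
    | h u w =>
      have huw : H.Adj u w := he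
      obtain ⟨a, ha, b, hb, hab⟩ := hS u w huw
      obtain ⟨a', ha', b', hb', Z, hZS, harc, hZ⟩ :=
        exists_arc_between isClosed_closure isClosed_closure ((hcl u w huw.ne).disjoint hK)
          (subset_closure ha) (subset_closure hb) hab
      have hZ' : Z ∩ (⋃ v, closure (B v)) = {a', b'} := by
        rw [← hZ]
        apply Set.Subset.antisymm
        · rintro z ⟨hz, hzB⟩
          obtain ⟨v, hv⟩ := Set.mem_iUnion.1 hzB
          refine ⟨hz, ?_⟩
          by_cases hvu : v = u
          · exact Or.inl (hvu ▸ hv)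
          by_cases hvw : v = w
          · exact Or.inr (hvw ▸ hv)
          have := (hSB _ he v (by simp [hvu, hvw])).closure_right.disjoint hK
          exact (Set.disjoint_left.1 this (hZS hz) hv).elim
        · refine Set.inter_subset_inter_right _ (Set.union_subset ?_ ?_)
          · exact Set.subset_iUnion (fun v => closure (B v)) u
          · exact Set.subset_iUnion (fun v => closure (B v)) w
      refine ⟨Z, fun _ => ⟨hZS, fun u' w' heq => ?_⟩⟩
      rcases Sym2.eq_iff.1 heq with ⟨rfl, rfl⟩ | ⟨rfl, rfl⟩
      · exact ⟨a', ha', b', hb', harc, hZ'⟩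
      · obtain ⟨p, hp, hpZ⟩ := harc
        refine ⟨b', hb', a', ha', ⟨p.symm, ?_, ?_⟩, by rw [hZ', Set.pair_comm]⟩
        · intro s t hst
          exact unitInterval.symm_involutive.injective (hp hst)
        · rw [← hpZ]; exact p.symm_range
  choose P hP using key
  refine ⟨fun v => closure (B v), P, fun v => (hB v).isConnected.closure,
    fun v v' hv => (hcl v v' hv).disjoint hK, fun u w huw => (hP s(u, w) huw).2 u w rfl,
    ?_, hcl, ?_, ?_⟩
  · intro e he e' he' hne
    exact ((hSS e he e' he' hne).mono le_rfl (hP e he).1 (hP e' he').1).disjoint hK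
  · intro e he e' he' hne
    exact (hSS e he e' he' hne).mono le_rfl (hP e he).1 (hP e' he').1
  · intro u w huw v hvu hvw
    exact (hSB s(u, w) huw v (by simp [hvu, hvw])).closure_right.mono le_rfl
      (hP s(u, w) huw).1 subset_rfl

/-- In a length space, asymptotic minors may be tested on the relaxed fat minors. -/
lemma hasAsymptoticMinor_iff_weak {W : Type*} {H : SimpleGraph W} {X : Type*} [MetricSpace X]
    (hX : IsLengthSpace X) :
    HasAsymptoticMinor H X ↔ ∀ K : ℝ, 0 < K → HasWeakFatMinor H X K :=
  ⟨fun h K hK => (h (K + 2) (by linarith)).hasWeakFatMinor hX,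
    fun h K hK => (h K hK).hasMetricFatMinor hK⟩

/-- The data of a subdivision with one chosen orientation `(s e, t e)` of each edge `e`. -/
lemma IsSubdivisionOf.exists_paths {W W' : Type*} {Δ' : SimpleGraph W'} {Δ : SimpleGraph W}
    (h : IsSubdivisionOf Δ' Δ) :
    ∃ (φ : W → W') (s t : Δ.edgeSet → W) (p : ∀ e, Δ'.Walk (φ (s e)) (φ (t e))),
      Function.Injective φ ∧ (∀ e : Δ.edgeSet, (e : Sym2 W) = s(s e, t e)) ∧ (∀ e, (p e).IsPath) ∧
      (∀ e w, φ w ∈ (p e).support → w ∈ (e : Sym2 W)) ∧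
      (∀ e e', e ≠ e' → ∀ x ∈ (p e).support, x ∈ (p e').support →
        ∃ w, x = φ w ∧ w ∈ (e : Sym2 W) ∧ w ∈ (e' : Sym2 W)) ∧
      (∀ x, x ∈ Set.range φ ∨ ∃ e, x ∈ (p e).support) ∧
      (∀ f ∈ Δ'.edgeSet, ∃ e, f ∈ (p e).edges) := by
  obtain ⟨φ, P, hφ, hpath, hrev, hend, hdisj, hcov, hcovE⟩ := h
  have hor : ∀ e : Δ.edgeSet, ∃ st : W × W, (e : Sym2 W) = s(st.1, st.2) := by
    rintro ⟨e, he⟩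
    induction e with
    | h u w => exact ⟨(u, w), rfl⟩
  choose st hst using hor
  have hadj : ∀ e, Δ.Adj (st e).1 (st e).2 := fun e => by
    have := e.2; rw [hst e] at this; exact this
  have hrev' : ∀ u v (h : Δ.Adj u v), P v u h.symm = (P u v h).reverse := fun u v h =>
    SimpleGraph.Walk.ext_support (by rw [hrev, SimpleGraph.Walk.support_reverse])
  have haux : ∀ u v (h : Δ.Adj u v) u' v' (h' : Δ.Adj u' v'), s(u, v) = s(u', v') →
      (∀ x ∈ (P u v h).support, x ∈ (P u' v' h').support) ∧
      (∀ f ∈ (P u v h).edges, f ∈ (P u' v' h').edges) := by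
    intro u v h u' v' h' heq
    rcases Sym2.eq_iff.1 heq with ⟨rfl, rfl⟩ | ⟨rfl, rfl⟩
    · exact ⟨fun _ h => h, fun _ h => h⟩
    · rw [hrev' u v h]
      simp
  have hcases : ∀ u v (h : Δ.Adj u v), ∃ e : Δ.edgeSet,
      (∀ x ∈ (P u v h).support, x ∈ (P _ _ (hadj e)).support) ∧
      (∀ f ∈ (P u v h).edges, f ∈ (P _ _ (hadj e)).edges) := fun u v h =>
    ⟨⟨s(u, v), h⟩, haux u v h _ _ (hadj _) (hst ⟨s(u, v), h⟩)⟩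
  refine ⟨φ, fun e => (st e).1, fun e => (st e).2, fun e => P _ _ (hadj e), hφ, hst,
    fun e => hpath _ _ _, ?_, ?_, ?_, ?_⟩
  · intro e w hw
    rw [hst e, Sym2.mem_iff]
    exact (hend _ _ (hadj e) _ hw ⟨w, rfl⟩).imp (fun h => hφ h) (fun h => hφ h)
  · intro e e' hne x hx hx'
    obtain ⟨h1, h2⟩ := hdisj _ _ _ _ (hadj e) (hadj e')
      (fun h => hne (Subtype.ext (by rw [hst e, hst e', h]))) x hx hx'
    obtain ⟨w, rfl⟩ : ∃ w, x = φ w := h1.elim (fun h => ⟨_, h⟩) (fun h => ⟨_, h⟩)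
    refine ⟨w, rfl, ?_, ?_⟩
    · rw [hst e, Sym2.mem_iff]; exact h1.imp (fun h => hφ h) (fun h => hφ h)
    · rw [hst e', Sym2.mem_iff]; exact h2.imp (fun h => hφ h) (fun h => hφ h)
  · intro x
    rcases hcov x with h | ⟨u, v, h, hx⟩
    · exact Or.inl h
    · obtain ⟨e, he, -⟩ := hcases u v h
      exact Or.inr ⟨e, he x hx⟩
  · intro f hf
    obtain ⟨u, v, h, hx⟩ := hcovE f hf
    obtain ⟨e, -, he⟩ := hcases u v h
    exact ⟨e, he f hx⟩

/-- Branch sets and edge sets along a walk contain a path from the first branch set to the last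
one, which uses the last branch set only in its endpoint. -/
lemma exists_joinedIn_of_walk {V X : Type*} [MetricSpace X] {H : SimpleGraph V} {B : V → Set X}
    {S : Sym2 V → Set X} (hB : ∀ v, IsPathConnected (B v))
    (hS : ∀ u w, H.Adj u w → ∃ a ∈ B u, ∃ b ∈ B w, JoinedIn (S s(u, w)) a b)
    {x y : V} (q : H.Walk x y) (hxy : x ≠ y) {c : X} (hc : c ∈ B x) :
    ∃ b ∈ B y, JoinedIn ((⋃ z ∈ {z | z ∈ q.support ∧ z ≠ y}, B z) ∪ ⋃ f ∈ {f | f ∈ q.edges}, S f)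
      c b := by
  induction q generalizing c with
  | nil => exact absurd rfl hxy
  | @cons x x₁ y h q ih =>
    obtain ⟨a, ha, b, hb, hab⟩ := hS x x₁ h
    have h1 : JoinedIn ((⋃ z ∈ {z | z ∈ (SimpleGraph.Walk.cons h q).support ∧ z ≠ y}, B z) ∪
        ⋃ f ∈ {f | f ∈ (SimpleGraph.Walk.cons h q).edges}, S f) c b := by
      refine JoinedIn.trans (((hB x).joinedIn c hc a ha).mono ?_) (hab.mono ?_)
      · exact (Set.subset_biUnion_of_mem (u := B) (by simp [hxy])).trans Set.subset_union_left
      · exact (Set.subset_biUnion_of_mem (u := S) (by simp)).trans Set.subset_union_right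
    by_cases hx₁ : x₁ = y
    · exact ⟨b, hx₁ ▸ hb, h1⟩
    obtain ⟨b', hb', h2⟩ := ih hx₁ hb
    refine ⟨b', hb', h1.trans (h2.mono (Set.union_subset_union ?_ ?_))⟩
    · exact Set.biUnion_subset_biUnion_left fun z hz => ⟨by simp [hz.1], hz.2⟩
    · exact Set.biUnion_subset_biUnion_left fun f hf => by
        rw [Set.mem_ofPred, SimpleGraph.Walk.edges_cons]
        exact List.mem_cons_of_mem _ hf

/-- Suppressing the subdivision vertices: the edge set of an edge collects the edge sets and inner
branch sets along the path replacing it. -/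
lemma HasWeakFatMinor.of_subdivision {W W' X : Type*} [MetricSpace X] {Δ' : SimpleGraph W'}
    {Δ : SimpleGraph W} (hsub : IsSubdivisionOf Δ' Δ) {K : ℝ} (h : HasWeakFatMinor Δ' X K) :
    HasWeakFatMinor Δ X K := by
  obtain ⟨φ, s, t, p, hφ, hst, hpath, hend, hdisj, -, -⟩ := hsub.exists_paths
  obtain ⟨B, S, hB, hBB, hS, hSS, hSB⟩ := h
  have hsne : ∀ e, φ (s e) ≠ φ (t e) := fun e heq => by
    have := e.2
    rw [hst e, hφ heq] at this
    exact Δ.loopless.irrefl _ this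
  let inner : Δ.edgeSet → Set W' := fun e => {z | z ∈ (p e).support ∧ z ∉ Set.range φ}
  let links : Δ.edgeSet → Set (Sym2 W') := fun e => {f | f ∈ (p e).edges}
  let Q : Δ.edgeSet → Set X := fun e => (⋃ z ∈ inner e, B z) ∪ ⋃ f ∈ links e, S f
  have hlinks : ∀ e, ∀ f ∈ links e, f ∈ Δ'.edgeSet := fun e f hf =>
    SimpleGraph.Walk.edges_subset_edgeSet _ hf
  have hlinkv : ∀ e, ∀ f ∈ links e, ∀ z ∈ f, z ∈ (p e).support := fun e f hf z hz =>
    SimpleGraph.Walk.mem_support_of_mem_edges hf hz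
  have hinner : ∀ e e', e ≠ e' → ∀ z ∈ inner e, z ∉ (p e').support := fun e e' hne z hz hz' => by
    obtain ⟨w, hw, -⟩ := hdisj e e' hne z hz.1 hz'
    exact hz.2 ⟨w, hw.symm⟩
  have hQjoin : ∀ e, ∃ a ∈ B (φ (s e)), ∃ b ∈ B (φ (t e)), JoinedIn (Q e) a b := by
    intro e
    obtain ⟨x₁, h, q, hq⟩ := SimpleGraph.Walk.exists_eq_cons_of_ne (hsne e) (p e)
    obtain ⟨a, ha, b, hb, hab⟩ := hS _ _ h
    have hab' : JoinedIn (Q e) a b := hab.mono <|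
      (Set.subset_biUnion_of_mem (u := S) (show s(φ (s e), x₁) ∈ links e by
        simp [links, hq])).trans Set.subset_union_right
    by_cases hx₁ : x₁ = φ (t e)
    · exact ⟨a, ha, b, hx₁ ▸ hb, hab'⟩
    obtain ⟨b', hb', h2⟩ := exists_joinedIn_of_walk hB hS q hx₁ hb
    refine ⟨a, ha, b', hb', hab'.trans (h2.mono (Set.union_subset_union ?_ ?_))⟩
    · refine Set.biUnion_subset_biUnion_left fun z hz => ?_
      have hzp : z ∈ (p e).support := by rw [hq]; simp [hz.1]
      refine ⟨hzp, ?_⟩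
      rintro ⟨w, rfl⟩
      have hw := hend e w hzp
      rw [hst e, Sym2.mem_iff] at hw
      rcases hw with rfl | rfl
      · have := hpath e
        rw [hq, SimpleGraph.Walk.cons_isPath_iff] at this
        exact this.2 hz.1
      · exact hz.2 rfl
    · exact Set.biUnion_subset_biUnion_left fun f hf => by
        have : f ∈ (p e).edges := by
          rw [hq, SimpleGraph.Walk.edges_cons]; exact List.mem_cons_of_mem _ hf
        exact this
  classical
  refine ⟨fun w => B (φ w), fun e => if he : e ∈ Δ.edgeSet then Q ⟨e, he⟩ else ∅,
    fun w => hB _, fun v v' hv => hBB _ _ (hφ.ne hv), ?_, ?_, ?_⟩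
  · intro u w huw
    have huw' : s(u, w) ∈ Δ.edgeSet := huw
    beta_reduce
    rw [dif_pos huw']
    obtain ⟨a, ha, b, hb, hab⟩ := hQjoin ⟨_, huw'⟩
    rcases Sym2.eq_iff.1 (hst ⟨_, huw'⟩) with ⟨h1, h2⟩ | ⟨h1, h2⟩
    · rw [← h1] at ha; rw [← h2] at hb
      exact ⟨a, ha, b, hb, hab⟩
    · rw [← h2] at ha; rw [← h1] at hb
      exact ⟨b, hb, a, ha, hab.symm⟩
  · intro e he e' he' hne
    beta_reduce
    rw [dif_pos he, dif_pos he']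
    have hne' : (⟨e, he⟩ : Δ.edgeSet) ≠ ⟨e', he'⟩ := fun h => hne (Subtype.ext_iff.1 h)
    refine Far.union_left (Far.union_right ?_ ?_) (Far.union_right ?_ ?_)
    · exact Far.biUnion fun z hz z' hz' => hBB _ _ fun h => hinner _ _ hne' z hz (h ▸ hz'.1)
    · exact Far.biUnion fun z hz f hf => (hSB f (hlinks _ f hf) z fun hzf =>
        hinner _ _ hne' z hz (hlinkv _ f hf z hzf)).symm
    · exact Far.biUnion fun f hf z hz => hSB f (hlinks _ f hf) z fun hzf =>
        hinner _ _ hne'.symm z hz (hlinkv _ f hf z hzf)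
    · refine Far.biUnion fun f hf f' hf' => hSS f (hlinks _ f hf) f' (hlinks _ f' hf') ?_
      rintro rfl
      -- a common link would have two branch vertices as ends, common to both edges
      induction f with
      | h x y =>
        have hxy : x ≠ y := SimpleGraph.Adj.ne (hlinks _ _ hf)
        obtain ⟨v, rfl, hv, hv'⟩ := hdisj _ _ hne' x (hlinkv _ _ hf x (by simp))
          (hlinkv _ _ hf' x (by simp))
        obtain ⟨w, rfl, hw, hw'⟩ := hdisj _ _ hne' y (hlinkv _ _ hf y (by simp))
          (hlinkv _ _ hf' y (by simp))
        have hvw : v ≠ w := fun h => hxy (h ▸ rfl)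
        exact hne (((Sym2.mem_and_mem_iff hvw).1 ⟨hv, hw⟩).trans
          ((Sym2.mem_and_mem_iff hvw).1 ⟨hv', hw'⟩).symm)
  · intro e he v hv
    beta_reduce
    rw [dif_pos he]
    have hv' : φ v ∉ (p ⟨e, he⟩).support := fun h => hv (hend _ v h)
    refine Far.union_left ?_ ?_
    · intro x hx
      simp only [Set.mem_iUnion] at hx
      obtain ⟨z, hz, hx⟩ := hx
      exact hBB z (φ v) (fun h => hv' (h ▸ hz.1)) x hx
    · intro x hx
      simp only [Set.mem_iUnion] at hx
      obtain ⟨f, hf, hx⟩ := hx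
      exact hSB f (hlinks _ f hf) (φ v) (fun h => hv' (hlinkv _ f hf _ h)) x hx

/-- Subdividing: each edge of a sufficiently fat minor is replaced by a chain as in
`IsLengthSpace.exists_chain`, whose even members serve as branch sets and whose odd members
serve as edge sets. -/
lemma HasWeakFatMinor.subdivision {W W' X : Type*} [Finite W'] [MetricSpace X]
    (hX : IsLengthSpace X) {Δ' : SimpleGraph W'} {Δ : SimpleGraph W}
    (hsub : IsSubdivisionOf Δ' Δ) (h : ∀ K : ℝ, 0 < K → HasWeakFatMinor Δ X K) {K : ℝ}
    (hK : 0 < K) : HasWeakFatMinor Δ' X K := by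
  obtain ⟨φ, s, t, p, hφ, hst, hpath, hend, hdisj, hcov, hcovE⟩ := hsub.exists_paths
  have hsne : ∀ e, φ (s e) ≠ φ (t e) := fun e heq => by
    have := e.2
    rw [hst e, hφ heq] at this
    exact Δ.loopless.irrefl _ this
  let n : Δ.edgeSet → ℕ := fun e => (p e).length
  have hn0 : ∀ e, 0 < n e := fun e => Nat.pos_of_ne_zero fun h0 =>
    hsne e (SimpleGraph.Walk.eq_of_length_eq_zero h0)
  have hnN : ∀ e, n e ≤ Nat.card W' := fun e => by
    have := Fintype.ofFinite W'
    rw [Nat.card_eq_fintype_card]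
    exact (hpath e).length_lt.le
  set R : ℝ := (K + 2) * (2 * Nat.card W' + 1) + 4 with hRdef
  have hR0 : 0 < R := by positivity
  obtain ⟨B, S, hB, hBB, hS, hSS, hSB⟩ := h (K + R + R) (by positivity)
  have hchain : ∀ e : Δ.edgeSet, ∃ T : ℕ → Set X, T 0 = B (s e) ∧ T (2 * n e) = B (t e) ∧
      (∀ j, 1 ≤ j → j < 2 * n e → IsPathConnected (T j) ∧ T j ⊆ Metric.thickening R (S e)) ∧
      (∀ j < 2 * n e, (T j ∩ T (j + 1)).Nonempty) ∧
      ∀ i j, i + 2 ≤ j → j ≤ 2 * n e → Far K (T i) (T j) := by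
    intro e
    have hadj : Δ.Adj (s e) (t e) := by have := e.2; rw [hst e] at this; exact this
    obtain ⟨a, ha, b, hb, hab⟩ := hS _ _ hadj
    rw [← hst e] at hab
    obtain ⟨M, hM⟩ : ∃ M, 2 * n e = M + 2 := ⟨2 * n e - 2, by have := hn0 e; omega⟩
    have hMN : (M : ℝ) ≤ 2 * Nat.card W' := by
      have := hnN e
      exact_mod_cast (by omega : M ≤ 2 * Nat.card W')
    obtain ⟨T, h0, h1, h2, h3, h4⟩ := hX.exists_chain hK.le M (R := R) (K' := K + R + R)
      (by rw [hRdef]; nlinarith) (by linarith) (hBB _ _ hadj.ne) ha hb hab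
    rw [hM]
    exact ⟨T, h0, h1, fun j hj hj' => h2 j hj (by omega), fun j hj => h3 j (by omega), h4⟩
  choose T hT0 hTn hT hTne hTfar using hchain
  have hTT : ∀ e e', e ≠ e' → ∀ j j', 1 ≤ j → j < 2 * n e → 1 ≤ j' → j' < 2 * n e' →
      Far K (T e j) (T e' j') := fun e e' hne j j' h1 h2 h3 h4 =>
    (Far.thickening (R := R) (R' := R)
      (hSS e e.2 e' e'.2 fun h => hne (Subtype.ext h))).mono (by linarith)
      (hT e j h1 h2).2 (hT e' j' h3 h4).2
  have hTB : ∀ (e : Δ.edgeSet) w, w ∉ (e : Sym2 W) → ∀ j, 1 ≤ j → j < 2 * n e →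
      Far K (T e j) (B w) := fun e w hw j h1 h2 =>
    (Far.thickening_left (R := R) (hSB e e.2 w hw)).mono (by linarith) (hT e j h1 h2).2 subset_rfl
  have hinj : ∀ e i j, i ≤ n e → j ≤ n e → (p e).getVert i = (p e).getVert j → i = j :=
    fun e i j hi hj h => (hpath e).getVert_injOn hi hj h
  have hs : ∀ e, (p e).getVert 0 = φ (s e) := fun e => (p e).getVert_zero
  have ht : ∀ e, (p e).getVert (n e) = φ (t e) := fun e => (p e).getVert_length
  have hclass : ∀ x, (∃ w, x = φ w) ∨ ∃ e i, 0 < i ∧ i < n e ∧ (p e).getVert i = x := by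
    intro x
    rcases hcov x with ⟨w, hw⟩ | ⟨e, he⟩
    · exact Or.inl ⟨w, hw.symm⟩
    obtain ⟨i, rfl, hi⟩ := SimpleGraph.Walk.mem_support_iff_exists_getVert.1 he
    rcases Nat.eq_zero_or_pos i with rfl | hi0
    · exact Or.inl ⟨_, hs e⟩
    rcases hi.eq_or_lt with rfl | hlt
    · exact Or.inl ⟨_, ht e⟩
    · exact Or.inr ⟨e, i, hi0, hlt, rfl⟩
  have hendi : ∀ e w i, i ≤ n e → (p e).getVert i = φ w → (w = s e ∧ i = 0) ∨
      (w = t e ∧ i = n e) := by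
    intro e w i hi hw
    have := hend e w (hw ▸ (p e).getVert_mem_support i)
    rw [hst e, Sym2.mem_iff] at this
    rcases this with rfl | rfl
    · exact Or.inl ⟨rfl, hinj e i 0 hi (Nat.zero_le _) (hw.trans (hs e).symm)⟩
    · exact Or.inr ⟨rfl, hinj e i (n e) hi le_rfl (hw.trans (ht e).symm)⟩
  have hBx : ∀ x, ∃ Y : Set X, (∀ w, x = φ w → Y = B w) ∧
      ∀ e i, i ≤ n e → (p e).getVert i = x → Y = T e (2 * i) := by
    intro x
    by_cases hx : ∃ w, x = φ w
    · obtain ⟨w, rfl⟩ := hx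
      refine ⟨B w, fun w' hw' => by rw [hφ hw'], fun e i hi hw => ?_⟩
      rcases hendi e w i hi hw with ⟨rfl, rfl⟩ | ⟨rfl, rfl⟩
      · exact (hT0 e).symm
      · exact (hTn e).symm
    · obtain ⟨e, i, -, hi, rfl⟩ := (hclass x).resolve_left hx
      refine ⟨T e (2 * i), fun w hw => (hx ⟨w, hw⟩).elim, fun e' i' hi' heq => ?_⟩
      obtain rfl : e' = e := by
        by_contra hne
        obtain ⟨w, hw, -⟩ := hdisj e' e hne _ (heq ▸ (p e').getVert_mem_support i')
          ((p e).getVert_mem_support i)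
        exact hx ⟨w, hw⟩
      rw [hinj _ _ _ hi' hi.le heq]
  choose B' hB'φ hB'T using hBx
  have hSf : ∀ f : Sym2 W', ∃ Y : Set X, f ∈ Δ'.edgeSet → ∃ e i, i < n e ∧
      f = s((p e).getVert i, (p e).getVert (i + 1)) ∧ Y = T e (2 * i + 1) := by
    intro f
    by_cases hf : f ∈ Δ'.edgeSet
    swap
    · exact ⟨∅, fun h => absurd h hf⟩
    obtain ⟨e, he⟩ := hcovE f hf
    induction f with
    | h x y =>
      obtain ⟨i, hi, heq⟩ := SimpleGraph.Walk.mk_mem_edges_iff_exists _ |>.1 he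
      exact ⟨_, fun _ => ⟨e, i, hi, heq.symm, rfl⟩⟩
  choose S' hS' using hSf
  -- a branch set is far from those inner members of a chain that are not next to it
  have hBT : ∀ w e j, 1 ≤ j → j < 2 * n e → (w = s e → 2 ≤ j) → (w = t e → j + 2 ≤ 2 * n e) →
      Far K (B w) (T e j) := by
    intro w e j h1 h2 h3 h4
    by_cases hw : w ∈ (e : Sym2 W)
    · rw [hst e, Sym2.mem_iff] at hw
      rcases hw with rfl | rfl
      · rw [← hT0]; exact hTfar e 0 j (h3 rfl) h2.le
      · rw [← hTn]; exact (hTfar e j _ (h4 rfl) le_rfl).symm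
    · exact (hTB e w hw j h1 h2).symm
  have hTfar' : ∀ e i j, i ≤ 2 * n e → j ≤ 2 * n e → (i + 2 ≤ j ∨ j + 2 ≤ i) →
      Far K (T e i) (T e j) := fun e i j hi hj h =>
    h.elim (fun h => hTfar e i j h hj) (fun h => (hTfar e j i h hi).symm)
  refine ⟨B', S', ?_, ?_, ?_, ?_, ?_⟩
  · intro x
    rcases hclass x with ⟨w, rfl⟩ | ⟨e, i, hi0, hi, rfl⟩
    · rw [hB'φ _ w rfl]; exact hB w
    · rw [hB'T _ e i hi.le rfl]; exact (hT e _ (by omega) (by omega)).1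
  · intro x x' hne
    rcases hclass x with ⟨w, rfl⟩ | ⟨e, i, hi0, hi, rfl⟩ <;>
      rcases hclass x' with ⟨w', rfl⟩ | ⟨e', i', hi0', hi', rfl⟩
    · rw [hB'φ _ w rfl, hB'φ _ w' rfl]
      exact (hBB w w' fun h => hne (h ▸ rfl)).mono (by linarith) subset_rfl subset_rfl
    · rw [hB'φ _ w rfl, hB'T _ e' i' hi'.le rfl]
      exact hBT _ _ _ (by omega) (by omega) (fun _ => by omega) (fun _ => by omega)
    · rw [hB'φ _ w' rfl, hB'T _ e i hi.le rfl]
      exact (hBT _ _ _ (by omega) (by omega) (fun _ => by omega) (fun _ => by omega)).symm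
    · rw [hB'T _ e i hi.le rfl, hB'T _ e' i' hi'.le rfl]
      by_cases hee : e = e'
      · subst hee
        have : i ≠ i' := fun h => hne (h ▸ rfl)
        exact hTfar' _ _ _ (by omega) (by omega) (by omega)
      · exact hTT _ _ hee _ _ (by omega) (by omega) (by omega) (by omega)
  · intro u w huw
    obtain ⟨e, i, hi, hf, hY⟩ := hS' s(u, w) huw
    rw [hY]
    obtain ⟨a, ha1, ha2⟩ := hTne e (2 * i) (by omega)
    obtain ⟨b, hb1, hb2⟩ := hTne e (2 * i + 1) (by omega)
    have hab := (hT e (2 * i + 1) (by omega) (by omega)).1.joinedIn a ha2 b hb1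
    have h1 := hB'T _ e i hi.le rfl
    have h2 := hB'T _ e (i + 1) hi rfl
    rcases Sym2.eq_iff.1 hf with ⟨rfl, rfl⟩ | ⟨rfl, rfl⟩
    · exact ⟨a, h1 ▸ ha1, b, h2 ▸ hb2, hab⟩
    · exact ⟨b, h2 ▸ hb2, a, h1 ▸ ha1, hab.symm⟩
  · intro f hf f' hf' hne
    obtain ⟨e, i, hi, hfe, hY⟩ := hS' f hf
    obtain ⟨e', i', hi', hfe', hY'⟩ := hS' f' hf'
    rw [hY, hY']
    by_cases hee : e = e'
    · subst hee
      have : i ≠ i' := fun h => hne (by rw [hfe, hfe', h])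
      exact hTfar' _ _ _ (by omega) (by omega) (by omega)
    · exact hTT _ _ hee _ _ (by omega) (by omega) (by omega) (by omega)
  · intro f hf x hx
    obtain ⟨e, i, hi, hfe, hY⟩ := hS' f hf
    rw [hfe, Sym2.mem_iff, not_or] at hx
    rw [hY]
    rcases hclass x with ⟨w, rfl⟩ | ⟨e', i', hi0', hi', rfl⟩
    · rw [hB'φ _ w rfl]
      refine (hBT _ _ _ (by omega) (by omega) (fun h => ?_) (fun h => ?_)).symm
      · have : i ≠ 0 := by rintro rfl; exact hx.1 (by rw [hs, h])
        omega
      · have : i + 1 ≠ n e := fun h' => hx.2 (by rw [h', ht, h])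
        omega
    · rw [hB'T _ e' i' hi'.le rfl]
      by_cases hee : e = e'
      · subst hee
        have h1 : i' ≠ i := fun h => hx.1 (h ▸ rfl)
        have h2 : i' ≠ i + 1 := fun h => hx.2 (h ▸ rfl)
        exact hTfar' _ _ _ (by omega) (by omega) (by omega)
      · exact hTT _ _ hee _ _ (by omega) (by omega) (by omega) (by omega)

/-- A length space has the same asymptotic minors before and after a finite subdivision. -/
lemma hasAsymptoticMinor_iff_of_isSubdivisionOf {W W' X : Type*} [Finite W'] [MetricSpace X]
    (hX : IsLengthSpace X) {Δ' : SimpleGraph W'} {Δ : SimpleGraph W}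
    (hsub : IsSubdivisionOf Δ' Δ) : HasAsymptoticMinor Δ' X ↔ HasAsymptoticMinor Δ X := by
  rw [hasAsymptoticMinor_iff_weak hX, hasAsymptoticMinor_iff_weak hX]
  exact ⟨fun h K hK => (h K hK).of_subdivision hsub,
    fun h K hK => HasWeakFatMinor.subdivision hX hsub h hK⟩

/-- If two finite graphs `Γ` and `Δ` are homeomorphic as topological spaces (equivalently,
are subdivisions of a common graph), then for every length space `X`, `X` has `Γ` as an
asymptotic minor iff it has `Δ` as an asymptotic minor. -/
theorem asymptoticMinor_iff_of_homeomorphic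
    {X : Type} [MetricSpace X] (hX : IsLengthSpace X)
    {WΓ WΔ : Type} [Finite WΓ] [Finite WΔ]
    (Γ : SimpleGraph WΓ) (Δ : SimpleGraph WΔ)
    (hhomeo : ∃ (W : Type) (Λ : SimpleGraph W),
      IsSubdivisionOf Γ Λ ∧ IsSubdivisionOf Δ Λ) :
    HasAsymptoticMinor Γ X ↔ HasAsymptoticMinor Δ X := by
  obtain ⟨W, Λ, hΓ, hΔ⟩ := hhomeo
  rw [hasAsymptoticMinor_iff_of_isSubdivisionOf hX hΓ,
    hasAsymptoticMinor_iff_of_isSubdivisionOf hX hΔ]
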